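/- arXiv:2002.02876 — 12 statements merged into one kernel-verified Lean document; each statement's English description precedes it below -/
import Mathlib

section
/- Suppose ρ^w and ρ^b are monotone, certainty equivalent and translation invariant, that ϱ^w(0) and ϱ^b(0) are finite, and that the fair price interval is nonempty, i.e. −ϱ^b(0) ≤ ϱ^w(0). Define (in the extended reals) the super-hedging price p̄^w := inf{p ∈ ℝ : ∃ X ∈ H with F(ω) − X(ω) ≤ p for all ω ∈ Ω} and the sub-hedging price p̄^b := sup{p ∈ ℝ : ∃ X ∈ H with F(ω) + X(ω) ≥ p for all ω ∈ Ω}. Then the equal risk price p* := (ϱ^w(0) − ϱ^b(0))/2 lies in the no-arbitrage interval: p̄^b ≤ p* ≤ p̄^w. -/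
/-- For monotone, certainty equivalent and translation invariant risk
measures with finite minimal risks at price 0 and a nonempty fair price interval, the
equal risk price `(ϱw 0 - ϱb 0)/2` lies in the no-arbitrage interval determined by the
sub-hedging and super-hedging prices (taken in the extended reals). -/
theorem stmt_1
    (Ω : Type*) [Nonempty Ω]
    (H : Set (Ω → ℝ)) (hH : H.Nonempty)
    (F : Ω → ℝ)
    (ρw ρb : (Ω → ℝ) → ℝ)
    (hMonW : ∀ X Y : Ω → ℝ, (∀ ω, X ω ≤ Y ω) → ρw X ≤ ρw Y)
    (hMonB : ∀ X Y : Ω → ℝ, (∀ ω, X ω ≤ Y ω) → ρb X ≤ ρb Y)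
    (hCEw : ∀ c : ℝ, ρw (fun _ => c) = c)
    (hCEb : ∀ c : ℝ, ρb (fun _ => c) = c)
    (hTIw : ∀ (Y : Ω → ℝ) (c : ℝ), ρw (fun ω => Y ω + c) = ρw Y + c)
    (hTIb : ∀ (Y : Ω → ℝ) (c : ℝ), ρb (fun ω => Y ω + c) = ρb Y + c)
    (ϱw ϱb : ℝ → ℝ)
    (hϱw : ∀ p : ℝ, ϱw p = sInf ((fun X : Ω → ℝ => ρw (fun ω => F ω - X ω - p)) '' H))
    (hϱb : ∀ p : ℝ, ϱb p = sInf ((fun X : Ω → ℝ => ρb (fun ω => -F ω - X ω + p)) '' H))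
    (hFinw : BddBelow ((fun X : Ω → ℝ => ρw (fun ω => F ω - X ω - (0:ℝ))) '' H))
    (hFinb : BddBelow ((fun X : Ω → ℝ => ρb (fun ω => -F ω - X ω + (0:ℝ))) '' H))
    (hFPI : -ϱb 0 ≤ ϱw 0) :
    sSup ((fun p : ℝ => (p : EReal)) ''
        {p : ℝ | ∃ X ∈ H, ∀ ω, p ≤ F ω + X ω})
      ≤ (((ϱw 0 - ϱb 0) / 2 : ℝ) : EReal) ∧
    (((ϱw 0 - ϱb 0) / 2 : ℝ) : EReal)
      ≤ sInf ((fun p : ℝ => (p : EReal)) ''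
        {p : ℝ | ∃ X ∈ H, ∀ ω, F ω - X ω ≤ p}) := by
  constructor
  · apply sSup_le
    rintro _ ⟨p, ⟨X, hX, h⟩, rfl⟩
    have h1 : ϱb 0 ≤ ρb (fun ω => -F ω - X ω + (0:ℝ)) := by
      rw [hϱb 0]
      exact csInf_le hFinb ⟨X, hX, rfl⟩
    have h2 : ρb (fun ω => -F ω - X ω + (0:ℝ)) ≤ -p := by
      rw [← hCEb (-p)]
      apply hMonB
      intro ω
      have := h ω
      linarith
    exact EReal.coe_le_coe_iff.2 (by linarith)
  · apply le_sInf
    rintro _ ⟨p, ⟨X, hX, h⟩, rfl⟩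
    have h1 : ϱw 0 ≤ ρw (fun ω => F ω - X ω - (0:ℝ)) := by
      rw [hϱw 0]
      exact csInf_le hFinw ⟨X, hX, rfl⟩
    have h2 : ρw (fun ω => F ω - X ω - (0:ℝ)) ≤ p := by
      rw [← hCEw p]
      apply hMonW
      intro ω
      have := h ω
      linarith
    exact EReal.coe_le_coe_iff.2 (by linarith)
end

section
/- Suppose τ0 ∈ T minimizes τ ↦ ϱ^b(0,τ) over T and that ϱ^w(0,τ0) and ϱ^b(0,τ0) are finite. Then p* := (ϱ^w(0,τ0) − ϱ^b(0,τ0))/2 satisfies ϱ^w(p*,τ0) = ϱ^b(p*,τ0), and τ0 also minimizes τ ↦ ϱ^b(p*,τ); that is, the equal risk price with commitment exists and equals the center of the interval [−ϱ^b(0,τ0), ϱ^w(0,τ0)]. -/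
lemma iInf_shift_le {ι : Type*} (f : ι → ℝ) (c : ℝ) :
    (⨅ i, (f i : EReal)) + (c : EReal) ≤ ⨅ i, ((f i + c : ℝ) : EReal) := by
  refine le_iInf fun i => ?_
  rw [EReal.coe_add]
  exact add_le_add (iInf_le _ i) le_rfl

lemma iInf_shift {ι : Type*} (f : ι → ℝ) (c : ℝ) :
    ⨅ i, ((f i + c : ℝ) : EReal) = (⨅ i, (f i : EReal)) + (c : EReal) := by
  refine le_antisymm ?_ (iInf_shift_le f c)
  have h := iInf_shift_le (fun i => f i + c) (-c)
  simp only [add_neg_cancel_right] at h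
  have h2 := add_le_add h (le_refl (c : EReal))
  rwa [add_assoc, ← EReal.coe_add, neg_add_cancel, EReal.coe_zero, add_zero] at h2

/-- For an American option with commitment, if `τ0` minimizes the buyer's
minimal risk at price 0 and the two minimal risks at `(0, τ0)` are finite, then the
equal risk price with commitment exists and equals the center of the interval
`[-ϱb(0,τ0), ϱw(0,τ0)]`. -/
theorem stmt_3
    (Ω T : Type*) [Nonempty Ω] [Nonempty T]
    (F : T → Ω → ℝ)
    (H : T → Set (Ω → ℝ)) (hH : ∀ τ, (H τ).Nonempty)
    (ρw ρb : (Ω → ℝ) → ℝ)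
    (hTIw : ∀ (Y : Ω → ℝ) (c : ℝ), ρw (fun ω => Y ω + c) = ρw Y + c)
    (hTIb : ∀ (Y : Ω → ℝ) (c : ℝ), ρb (fun ω => Y ω + c) = ρb Y + c)
    (ϱw ϱb : ℝ → T → EReal)
    (hϱw : ∀ (p : ℝ) (τ : T),
      ϱw p τ = ⨅ X : H τ, ((ρw (fun ω => F τ ω - (X : Ω → ℝ) ω - p) : ℝ) : EReal))
    (hϱb : ∀ (p : ℝ) (τ : T),
      ϱb p τ = ⨅ X : H τ, ((ρb (fun ω => -F τ ω - (X : Ω → ℝ) ω + p) : ℝ) : EReal))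
    (τ0 : T) (hτ0 : ∀ τ : T, ϱb 0 τ0 ≤ ϱb 0 τ)
    (w0 b0 : ℝ) (hw0 : ϱw 0 τ0 = (w0 : EReal)) (hb0 : ϱb 0 τ0 = (b0 : EReal)) :
    ϱw ((w0 - b0) / 2) τ0 = ϱb ((w0 - b0) / 2) τ0 ∧
    (∀ τ : T, ϱb ((w0 - b0) / 2) τ0 ≤ ϱb ((w0 - b0) / 2) τ) := by
  have hw : ∀ p τ, ϱw p τ = ϱw 0 τ + ((-p : ℝ) : EReal) := by
    intro p τ
    rw [hϱw, hϱw, ← iInf_shift]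
    refine iInf_congr fun X => ?_
    rw [← hTIw]
    simp only [sub_eq_add_neg, neg_zero, add_zero]
  have hb : ∀ p τ, ϱb p τ = ϱb 0 τ + (p : EReal) := by
    intro p τ
    rw [hϱb, hϱb, ← iInf_shift]
    refine iInf_congr fun X => ?_
    rw [← hTIb]
    simp only [add_zero]
  refine ⟨?_, fun τ => ?_⟩
  · rw [hw, hb, hw0, hb0, ← EReal.coe_add, ← EReal.coe_add]
    congr 1
    ring
  · rw [hb _ τ0, hb _ τ]
    exact add_le_add (hτ0 τ) le_rfl
end

section
/- The dynamic risk measure built from conditionally translation-invariant conditional risk mappings is recursive: for all 0 ≤ k < v ≤ ℓ ≤ K and all functions Z_k,…,Z_ℓ : Ω → ℝ with each Z_{k'} measurable with respect to F_{k'}, one has R_{k,ℓ}(Z_k,…,Z_ℓ) = R_{k,v}(Z_k,…,Z_{v−1}, R_{v,ℓ}(Z_v,…,Z_ℓ)). -/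
/-- Composition `ρ_k ∘ ρ_{k+1} ∘ ⋯ ∘ ρ_{k+n-1}` of the conditional risk mappings. -/
noncomputable def riskComp {Ω : Type*} (ρ : ℕ → (Ω → ℝ) → (Ω → ℝ)) :
    ℕ → ℕ → (Ω → ℝ) → (Ω → ℝ)
  | _, 0 => id
  | k, n + 1 => ρ k ∘ riskComp ρ (k + 1) n

/-- The dynamic risk measure
`R_{k,ℓ}(Z_k,…,Z_ℓ) := ρ_k(ρ_{k+1}(⋯ρ_{ℓ-1}(Z_k + Z_{k+1} + ⋯ + Z_ℓ)⋯))`,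
with the convention `R_{ℓ,ℓ}(Z_ℓ) = Z_ℓ`. -/
noncomputable def Rdyn {Ω : Type*} (ρ : ℕ → (Ω → ℝ) → (Ω → ℝ)) (k ℓ : ℕ)
    (Z : ℕ → Ω → ℝ) : Ω → ℝ :=
  riskComp ρ k (ℓ - k) (fun ω => ∑ i ∈ Finset.Icc k ℓ, Z i ω)

theorem riskComp_add_aux {Ω : Type*} (ρ : ℕ → (Ω → ℝ) → (Ω → ℝ)) (n : ℕ) :
    ∀ (m k : ℕ) (Y : Ω → ℝ),
      riskComp ρ k (m + n) Y = riskComp ρ k m (riskComp ρ (k + m) n Y) := by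
  intro m
  induction m with
  | zero => intro k Y; simp [riskComp]
  | succ m ih =>
    intro k Y
    have e : m + 1 + n = (m + n) + 1 := by omega
    have e2 : k + (m + 1) = k + 1 + m := by omega
    rw [e, e2]
    simp only [riskComp, Function.comp_apply, ih]

theorem riskComp_TI_aux {Ω : Type*} (K : ℕ)
    (𝓕 : ℕ → MeasurableSpace Ω)
    (hFiltration : ∀ i j : ℕ, i ≤ j → j ≤ K → 𝓕 i ≤ 𝓕 j)
    (ρ : ℕ → (Ω → ℝ) → (Ω → ℝ))
    (hTI : ∀ k : ℕ, k < K → ∀ X Y : Ω → ℝ, @Measurable Ω ℝ (𝓕 k) _ X →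
      ρ k (fun ω => X ω + Y ω) = fun ω => X ω + ρ k Y ω) :
    ∀ (n k : ℕ), k + n ≤ K → ∀ X Y : Ω → ℝ, @Measurable Ω ℝ (𝓕 k) _ X →
      riskComp ρ k n (fun ω => X ω + Y ω) = fun ω => X ω + riskComp ρ k n Y ω := by
  intro n
  induction n with
  | zero => intro k _ X Y _; simp [riskComp]
  | succ n ih =>
    intro k hk X Y hX
    simp only [riskComp, Function.comp_apply]
    rw [ih (k + 1) (by omega) X Y
      (hX.mono (hFiltration k (k + 1) (by omega) (by omega)) le_rfl),
      hTI k (by omega) X _ hX]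

/-- the dynamic risk measure built from conditionally translation-invariant
conditional risk mappings is recursive: for all `0 ≤ k < v ≤ ℓ ≤ K` and adapted
`Z_k, …, Z_ℓ`, `R_{k,ℓ}(Z_k,…,Z_ℓ) = R_{k,v}(Z_k,…,Z_{v-1}, R_{v,ℓ}(Z_v,…,Z_ℓ))`. -/
theorem stmt_5 {Ω : Type*} (K : ℕ)
    (𝓕 : ℕ → MeasurableSpace Ω)
    (hFiltration : ∀ i j : ℕ, i ≤ j → j ≤ K → 𝓕 i ≤ 𝓕 j)
    (ρ : ℕ → (Ω → ℝ) → (Ω → ℝ))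
    (hTI : ∀ k : ℕ, k < K → ∀ X Y : Ω → ℝ, @Measurable Ω ℝ (𝓕 k) _ X →
      ρ k (fun ω => X ω + Y ω) = fun ω => X ω + ρ k Y ω)
    (hMeas : ∀ k : ℕ, k < K → ∀ Y : Ω → ℝ, @Measurable Ω ℝ (𝓕 k) _ (ρ k Y))
    (k v ℓ : ℕ) (hkv : k < v) (hvl : v ≤ ℓ) (hℓK : ℓ ≤ K)
    (Z : ℕ → Ω → ℝ) (hZ : ∀ i : ℕ, k ≤ i → i ≤ ℓ → @Measurable Ω ℝ (𝓕 i) _ (Z i)) :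
    Rdyn ρ k ℓ Z = Rdyn ρ k v (fun i => if i = v then Rdyn ρ v ℓ Z else Z i) := by
  have hX : @Measurable Ω ℝ (𝓕 v) _ (fun ω => ∑ i ∈ Finset.Ico k v, Z i ω) := by
    refine Finset.measurable_fun_sum _ fun i hi => ?_
    rw [Finset.mem_Ico] at hi
    exact (hZ i hi.1 (by omega)).mono (hFiltration i v (by omega) (by omega)) le_rfl
  have hsplit : (fun ω => ∑ i ∈ Finset.Icc k ℓ, Z i ω) = fun ω =>
      (∑ i ∈ Finset.Ico k v, Z i ω) + ∑ i ∈ Finset.Icc v ℓ, Z i ω := by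
    funext ω
    rw [← Finset.Ico_add_one_right_eq_Icc, ← Finset.Ico_add_one_right_eq_Icc,
      Finset.sum_Ico_consecutive _ (by omega) (by omega)]
  have hr : (fun ω => ∑ i ∈ Finset.Icc k v, (if i = v then Rdyn ρ v ℓ Z else Z i) ω) =
      fun ω => (∑ i ∈ Finset.Ico k v, Z i ω) + Rdyn ρ v ℓ Z ω := by
    funext ω
    rw [← Finset.Ico_add_one_right_eq_Icc, Finset.sum_Ico_succ_top (by omega), if_pos rfl]
    congr 1
    refine Finset.sum_congr rfl fun i hi => ?_
    rw [Finset.mem_Ico] at hi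
    rw [if_neg (by omega)]
  have e : ℓ - k = (v - k) + (ℓ - v) := by omega
  have e2 : k + (v - k) = v := by omega
  rw [Rdyn, Rdyn, hr, hsplit, e, riskComp_add_aux, e2,
    riskComp_TI_aux K 𝓕 hFiltration ρ hTI (ℓ - v) v (by omega) _ _ hX]
  rfl
end

section
/- Let U ⊆ ℝ^K be nonempty, convex and compact. Then U ∩ V(U) is the no-arbitrage subset of U: (1) U ∩ V(U) ⊆ A(U ∩ V(U)); and (2) every convex compact set U' ⊆ U with U' ⊆ A(U') satisfies U' ⊆ U ∩ V(U). -/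
open scoped BigOperators

/-- The length-`k` prefix of `w` belongs to the prefix set `U_{1:k}`
(only the first `k` coordinates of `w` are relevant). -/
def prefixMem {K : ℕ} (U : Set (Fin K → ℝ)) (k : ℕ) (w : ℕ → ℝ) : Prop :=
  ∃ r ∈ U, ∀ i : Fin K, (i : ℕ) < k → r i = w i

/-- The one-step projection `U_{k+1}(w)` of `U` given the length-`k` prefix `w`. -/
def oneStep {K : ℕ} (U : Set (Fin K → ℝ)) (k : ℕ) (w : ℕ → ℝ) : Set ℝ :=
  {s | ∃ r ∈ U, (∀ i : Fin K, (i : ℕ) < k → r i = w i) ∧ ∀ h : k < K, r ⟨k, h⟩ = s}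

/-- The game values `π^U_k(w)`, defined backward from `π^U_K = 0` by
`π^U_k(w) = inf_{ζ ∈ ℝ} sup_{s ∈ U_{k+1}(w)} (-ζ·s + π^U_{k+1}(w⌢s))`,
with values in the extended reals (the supremum over the empty set being `⊥`).
Only the first `k` coordinates of `w` are relevant. -/
noncomputable def piVal {K : ℕ} (U : Set (Fin K → ℝ)) (k : ℕ) (w : ℕ → ℝ) : EReal :=
  if h : k < K then
    ⨅ ζ : ℝ, ⨆ s ∈ oneStep U k w,
      (((-ζ * s : ℝ) : EReal) + piVal U (k + 1) (Function.update w k s))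
  else 0
  termination_by K - k
  decreasing_by omega

/-- A vector `r ∈ ℝ^K` seen as a prefix function `ℕ → ℝ` (padded with zeros). -/
def padR {K : ℕ} (r : Fin K → ℝ) : ℕ → ℝ := fun i => if h : i < K then r ⟨i, h⟩ else 0

/-- `r_{1:k}⌢0_{K-k}`: the first `k` coordinates of `r` padded with zeros. -/
def zeroPad {K : ℕ} (r : Fin K → ℝ) (k : ℕ) : Fin K → ℝ :=
  fun i => if (i : ℕ) < k then r i else 0

/-- A length-`k` prefix `w : ℕ → ℝ` padded with zeros into a vector of `ℝ^K`. -/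
def padPrefix (K : ℕ) (w : ℕ → ℝ) (k : ℕ) : Fin K → ℝ :=
  fun i => if (i : ℕ) < k then w i else 0

/-- `A(U)`: the set of returns with bounded conditional market risk. -/
def Aset {K : ℕ} (U : Set (Fin K → ℝ)) : Set (Fin K → ℝ) :=
  {r | ∀ k : ℕ, k < K → ¬ prefixMem U k (padR r) ∨
    ((⊥ : EReal) < piVal U k (padR r) ∧ piVal U k (padR r) ≤ 0)}

/-- `V(U)`: the set of returns all of whose zero-padded prefixes remain in `U`
(whenever the prefix is realizable in `U`), together with `0 ∈ U`. -/
def Vset {K : ℕ} (U : Set (Fin K → ℝ)) : Set (Fin K → ℝ) :=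
  {r | (0 : Fin K → ℝ) ∈ U ∧
    ∀ k : ℕ, 1 ≤ k → k ≤ K - 1 → zeroPad r k ∈ U ∨ ¬ prefixMem U k (padR r)}

theorem piVal_nonpos {K : ℕ} (U : Set (Fin K → ℝ)) (n : ℕ) :
    ∀ (k : ℕ) (w : ℕ → ℝ), K - k = n → piVal U k w ≤ 0 := by
  induction n with
  | zero =>
    intro k w h
    rw [piVal, dif_neg (by omega)]
  | succ n ih =>
    intro k w h
    rw [piVal, dif_pos (by omega)]
    refine iInf_le_of_le 0 ?_
    refine iSup₂_le fun s _ => ?_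
    have := ih (k + 1) (Function.update w k s) (by omega)
    simpa using this

theorem zeroPad_mem_U {K : ℕ} {U : Set (Fin K → ℝ)} {r : Fin K → ℝ}
    (hr : r ∈ U ∩ Vset U) (k : ℕ) : zeroPad r k ∈ U := by
  obtain ⟨hU, h0, hV⟩ := hr
  rcases Nat.eq_zero_or_pos k with rfl | hk
  · have : zeroPad r 0 = 0 := by
      funext i
      simp [zeroPad]
    rwa [this]
  · by_cases hkK : k ≤ K - 1
    · rcases hV k hk hkK with h | h
      · exact h
      · exact absurd ⟨r, hU, fun i _ => by simp [padR]⟩ h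
    · have : zeroPad r k = r := by
        funext i
        have := i.2
        simp only [zeroPad]
        rw [if_pos (by omega)]
      rwa [this]

theorem zeroPad_mem_W {K : ℕ} {U : Set (Fin K → ℝ)} {r : Fin K → ℝ}
    (hr : r ∈ U ∩ Vset U) (k : ℕ) : zeroPad r k ∈ U ∩ Vset U := by
  refine ⟨zeroPad_mem_U hr k, hr.2.1, fun j _ _ => Or.inl ?_⟩
  have : zeroPad (zeroPad r k) j = zeroPad r (min j k) := by
    funext i
    simp only [zeroPad, lt_min_iff]
    split_ifs <;> first | rfl | omega
  rw [this]
  exact zeroPad_mem_U hr _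

theorem piVal_nonneg {K : ℕ} (U : Set (Fin K → ℝ)) (n : ℕ) :
    ∀ (k : ℕ) (w : ℕ → ℝ), K - k = n → prefixMem (U ∩ Vset U) k w →
      0 ≤ piVal (U ∩ Vset U) k w := by
  induction n with
  | zero =>
    intro k w h _
    rw [piVal, dif_neg (by omega)]
  | succ n ih =>
    intro k w h hw
    rw [piVal, dif_pos (by omega)]
    obtain ⟨r, hr, hrw⟩ := hw
    have hz := zeroPad_mem_W hr k
    have hag : ∀ i : Fin K, (i : ℕ) < k → zeroPad r k i = w i := by
      intro i hi
      simp only [zeroPad, if_pos hi]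
      exact hrw i hi
    refine le_iInf fun ζ => ?_
    refine le_iSup₂_of_le 0 ⟨zeroPad r k, hz, hag, fun h => by simp [zeroPad]⟩ ?_
    have := ih (k + 1) (Function.update w k 0) (by omega) ⟨zeroPad r k, hz, fun i hi => ?_⟩
    · simpa using this
    · by_cases hik : (i : ℕ) = k
      · rw [hik]
        simp [zeroPad, hik]
      · rw [Function.update_of_ne hik]
        exact hag i (by omega)

theorem zero_mem_oneStep {K : ℕ} (U : Set (Fin K → ℝ)) (hconv : Convex ℝ U)
    (hcomp : IsCompact U) (k : ℕ) (hk : k < K) (w : ℕ → ℝ) (hw : prefixMem U k w)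
    (hpi : (⊥ : EReal) < piVal U k w) : (0 : ℝ) ∈ oneStep U k w := by
  have himg : oneStep U k w =
      (fun r : Fin K → ℝ => r ⟨k, hk⟩) '' (U ∩ {r | ∀ i : Fin K, (i : ℕ) < k → r i = w i}) := by
    ext s
    constructor
    · rintro ⟨r, hr, h1, h2⟩
      exact ⟨r, ⟨hr, h1⟩, h2 hk⟩
    · rintro ⟨r, ⟨hr, h1⟩, h2⟩
      exact ⟨r, hr, h1, fun _ => h2⟩
  have hcl : IsClosed {r : Fin K → ℝ | ∀ i : Fin K, (i : ℕ) < k → r i = w i} := by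
    simp only [Set.setOf_forall]
    exact isClosed_iInter fun i => isClosed_iInter fun _ =>
      isClosed_eq (continuous_apply i) continuous_const
  have hS : IsCompact (oneStep U k w) := by
    rw [himg]
    exact (hcomp.inter_right hcl).image (continuous_apply _)
  have hC : Convex ℝ (oneStep U k w) := by
    rintro s ⟨r, hr, h1, h2⟩ t ⟨q, hq, g1, g2⟩ a b ha hb hab
    refine ⟨a • r + b • q, hconv hr hq ha hb hab, fun i hi => ?_, fun h => ?_⟩
    · simp only [Pi.add_apply, Pi.smul_apply, smul_eq_mul, h1 i hi, g1 i hi]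
      rw [← add_mul, hab, one_mul]
    · simp [h2 h, g2 h]
  have hN : (oneStep U k w).Nonempty := by
    obtain ⟨r, hr, h1⟩ := hw
    exact ⟨r ⟨k, hk⟩, r, hr, h1, fun _ => rfl⟩
  have key : ∀ c : ℝ, c ≠ 0 → (∀ s ∈ oneStep U k w, 1 ≤ c * s) → False := by
    intro c hc hcs
    have hle : ∀ M : ℝ, 0 ≤ M → piVal U k w ≤ ((-M : ℝ) : EReal) := by
      intro M hM
      rw [piVal, dif_pos hk]
      refine iInf_le_of_le (M * c) ?_
      refine iSup₂_le fun s hs => ?_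
      have h1 := piVal_nonpos U _ (k + 1) (Function.update w k s) rfl
      have h2 : -(M * c) * s ≤ -M := by nlinarith [hcs s hs]
      calc _ ≤ ((-M : ℝ) : EReal) + 0 := add_le_add (EReal.coe_le_coe_iff.2 h2) h1
        _ = _ := add_zero _
    obtain ⟨x, _, hx2⟩ := EReal.lt_iff_exists_real_btwn.1 hpi
    have := hx2.trans_le (hle |x| (abs_nonneg x))
    have := EReal.coe_lt_coe_iff.1 this
    linarith [neg_abs_le x]
  obtain ⟨a, haS, ha⟩ := hS.exists_isLeast hN
  obtain ⟨b, hbS, hb⟩ := hS.exists_isGreatest hN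
  rcases lt_or_ge 0 a with h | h
  · refine (key a⁻¹ (by positivity) fun s hs => ?_).elim
    have := ha hs
    rw [← inv_mul_cancel₀ h.ne']
    gcongr
  rcases lt_or_ge b 0 with h' | h'
  · refine (key b⁻¹ (inv_ne_zero h'.ne) fun s hs => ?_).elim
    have h3 := hb hs
    rw [← inv_mul_cancel₀ h'.ne]
    exact mul_le_mul_of_nonpos_left h3 (inv_nonpos.2 h'.le)
  exact hC.ordConnected.out haS hbS ⟨h, h'⟩

theorem zeroPad_mem_of {K : ℕ} (U : Set (Fin K → ℝ)) (hconv : Convex ℝ U)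
    (hcomp : IsCompact U) (hA : U ⊆ Aset U) (r : Fin K → ℝ) (hr : r ∈ U) (k : ℕ) (hk : k ≤ K) :
    zeroPad r k ∈ U := by
  have step : ∀ m, k ≤ m → m ≤ K → ∃ q ∈ U, ∀ i : Fin K, (i : ℕ) < m → q i = zeroPad r k i := by
    intro m hm
    induction m, hm using Nat.le_induction with
    | base => exact fun _ => ⟨r, hr, fun i hi => by simp [zeroPad, hi]⟩
    | succ m hm ih =>
      intro hmK
      obtain ⟨q, hq, hqr⟩ := ih (by omega)
      have hp : prefixMem U m (padR q) := ⟨q, hq, fun i _ => by simp [padR]⟩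
      rcases hA hq m (by omega) with h | h
      · exact absurd hp h
      obtain ⟨p, hpU, h1, h2⟩ := zero_mem_oneStep U hconv hcomp m (by omega) _ hp h.1
      refine ⟨p, hpU, fun i hi => ?_⟩
      by_cases him : (i : ℕ) < m
      · rw [h1 i him, ← hqr i him]
        simp [padR]
      · have : i = ⟨m, by omega⟩ := Fin.ext (by simp; omega)
        rw [this, h2 (by omega)]
        simp only [zeroPad]
        rw [if_neg (by omega)]
  obtain ⟨q, hq, h⟩ := step K hk le_rfl
  have : q = zeroPad r k := funext fun i => h i i.2
  exact this ▸ hq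

/-- for a nonempty, convex and compact uncertainty set `U ⊆ ℝ^K`,
`U ∩ V(U)` is the no-arbitrage subset of `U`: it is contained in `A(U ∩ V(U))`,
and it contains every convex compact subset `U' ⊆ U` with `U' ⊆ A(U')`. -/
theorem stmt_7 {K : ℕ} (U : Set (Fin K → ℝ))
    (hne : U.Nonempty) (hconv : Convex ℝ U) (hcomp : IsCompact U) :
    (U ∩ Vset U ⊆ Aset (U ∩ Vset U)) ∧
    (∀ U' : Set (Fin K → ℝ), U' ⊆ U → Convex ℝ U' → IsCompact U' →
      U' ⊆ Aset U' → U' ⊆ U ∩ Vset U) := by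
  refine ⟨fun r hr k hk => Or.inr ⟨?_, piVal_nonpos _ _ k _ rfl⟩, fun U' hU' hc' hk' hA r hr => ?_⟩
  · refine lt_of_lt_of_le EReal.bot_lt_zero (piVal_nonneg U _ k _ rfl ⟨r, hr, fun i _ => ?_⟩)
    simp [padR]
  · have hz := fun k hk => hU' (zeroPad_mem_of U' hc' hk' hA r hr k hk)
    refine ⟨hU' hr, ?_, fun k _ hk => Or.inl (hz k (by omega))⟩
    have := hz 0 (Nat.zero_le _)
    have h0 : zeroPad r 0 = 0 := by
      funext i
      simp [zeroPad]
    rwa [h0] at this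
end

section
/- For every nonempty, convex and compact set U ⊆ ℝ^K, A(U) = V(U): the set of returns with bounded conditional market risk coincides with the set of returns all of whose zero-padded prefixes remain in U (when the prefix is realizable in U). -/
open scoped BigOperators

/-- The dichotomy: on realizable prefixes the game value is `0` or `⊥`. -/
theorem piVal_dichotomy {K : ℕ} (U : Set (Fin K → ℝ))
    (hconv : Convex ℝ U) (hcl : IsClosed U) (n : ℕ) :
    ∀ (k : ℕ) (w : ℕ → ℝ), k + n = K → prefixMem U k w →
      (padPrefix K w k ∈ U → piVal U k w = 0) ∧ (padPrefix K w k ∉ U → piVal U k w = ⊥) := by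
  induction n with
  | zero =>
    intro k w hk hw
    have hnk : ¬ k < K := by omega
    refine ⟨fun _ => by rw [piVal, dif_neg hnk], fun h => (h ?_).elim⟩
    obtain ⟨r, hr, hrw⟩ := hw
    have : padPrefix K w k = r := by
      funext i
      have hi : (i : ℕ) < k := by have := i.2; omega
      simp [padPrefix, hi, hrw i hi]
    rwa [this]
  | succ n ih =>
    intro k w hk hw
    have hkK : k < K := by omega
    have hstep : ∀ s ∈ oneStep U k w, prefixMem U (k + 1) (Function.update w k s) := by
      rintro s ⟨r, hr, h1, h2⟩
      refine ⟨r, hr, fun i hi => ?_⟩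
      by_cases hik : (i : ℕ) = k
      · have : i = ⟨k, hkK⟩ := Fin.ext hik
        subst this
        simpa using h2 hkK
      · rw [Function.update_of_ne hik]
        exact h1 i (by omega)
    have hin : ∀ s, padPrefix K (Function.update w k s) (k + 1) ∈ U → s ∈ oneStep U k w := by
      intro s hs
      refine ⟨_, hs, fun i hi => ?_, fun h => ?_⟩
      · have h1 : (i : ℕ) < k + 1 := by omega
        have h2 : (i : ℕ) ≠ k := by omega
        simp [padPrefix, h1, Function.update_of_ne h2]
      · simp [padPrefix]
    have hz : padPrefix K (Function.update w k 0) (k + 1) = padPrefix K w k := by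
      funext i
      simp only [padPrefix, Function.update_apply]
      split_ifs <;> first | rfl | omega
    have ih' := fun s hs => ih (k + 1) (Function.update w k s) (by omega) (hstep s hs)
    rw [piVal, dif_pos hkK]
    constructor
    · intro h0
      apply le_antisymm
      · refine (iInf_le _ (0 : ℝ)).trans (iSup₂_le fun s hs => ?_)
        by_cases hsU : padPrefix K (Function.update w k s) (k + 1) ∈ U
        · rw [(ih' s hs).1 hsU]; simp
        · rw [(ih' s hs).2 hsU]; simp
      · refine le_iInf fun ζ => ?_
        rw [← hz] at h0
        refine le_trans ?_ (le_iSup₂ (0 : ℝ) (hin 0 h0))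
        rw [(ih' 0 (hin 0 h0)).1 h0]; simp
    · intro h0
      set S : Set ℝ := {s | padPrefix K (Function.update w k s) (k + 1) ∈ U} with hS
      have hSc : IsClosed S := by
        refine hcl.preimage (continuous_pi fun i => ?_)
        simp only [padPrefix, Function.update_apply]
        split_ifs <;> fun_prop
      have hSconv : Convex ℝ S := by
        intro s hs t ht a b ha hb hab
        have := hconv hs ht ha hb hab
        have e : padPrefix K (Function.update w k (a • s + b • t)) (k + 1) =
          a • padPrefix K (Function.update w k s) (k + 1) +
          b • padPrefix K (Function.update w k t) (k + 1) := by
          funext i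
          simp only [padPrefix, Function.update_apply, Pi.add_apply, Pi.smul_apply, smul_eq_mul]
          split_ifs
          · rfl
          · rw [← add_mul, hab, one_mul]
          · simp
        show padPrefix K (Function.update w k (a • s + b • t)) (k + 1) ∈ U
        rw [e]; exact this
      have h0S : (0 : ℝ) ∉ S := by
        intro h
        rw [hS, Set.mem_setOf_eq, hz] at h
        exact h0 h
      obtain ⟨f, u, hu, hf⟩ := geometric_hahn_banach_point_closed hSconv hSc h0S
      rw [map_zero] at hu
      rw [EReal.eq_bot_iff_forall_lt]
      intro y
      refine lt_of_le_of_lt (iInf_le _ ((|y| + 1) / u * f 1)) ?_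
      refine lt_of_le_of_lt (b := ((y - 1 : ℝ) : EReal)) (iSup₂_le fun s hs => ?_)
        (EReal.coe_lt_coe_iff.2 (by linarith))
      by_cases hsU : padPrefix K (Function.update w k s) (k + 1) ∈ U
      · rw [(ih' s hs).1 hsU, add_zero, EReal.coe_le_coe_iff]
        have h1 : u < f s := hf s hsU
        have h2 : f s = s * f 1 := by
          have := f.map_smul s (1 : ℝ)
          simpa using this
        have h3 : (|y| + 1) / u * u = |y| + 1 := by field_simp
        have h4 : (|y| + 1) / u * u ≤ (|y| + 1) / u * f s :=
          mul_le_mul_of_nonneg_left h1.le (by positivity)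
        have h5 := neg_abs_le y
        rw [h2] at h4
        nlinarith
      · rw [(ih' s hs).2 hsU]; simp

/-- for every nonempty, convex and compact set `U ⊆ ℝ^K`, the set of
returns with bounded conditional market risk coincides with the set of returns all of
whose zero-padded prefixes remain in `U` (when the prefix is realizable in `U`). -/
theorem stmt_8 {K : ℕ} (U : Set (Fin K → ℝ))
    (hne : U.Nonempty) (hconv : Convex ℝ U) (hcomp : IsCompact U) :
    Aset U = Vset U := by
  have key : ∀ (r : Fin K → ℝ) (k : ℕ), k < K → prefixMem U k (padR r) →
      (((⊥ : EReal) < piVal U k (padR r) ∧ piVal U k (padR r) ≤ 0) ↔ zeroPad r k ∈ U) := by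
    intro r k hk hp
    have h := piVal_dichotomy U hconv hcomp.isClosed (K - k) k (padR r) (by omega) hp
    have e : padPrefix K (padR r) k = zeroPad r k := by
      funext i
      simp [padPrefix, padR, zeroPad]
    rw [e] at h
    by_cases hz : zeroPad r k ∈ U
    · rw [h.1 hz]; simp [hz]
    · rw [h.2 hz]; simp [hz]
  have hp0 : ∀ r : Fin K → ℝ, prefixMem U 0 (padR r) := fun r =>
    ⟨hne.some, hne.some_mem, fun i hi => absurd hi (Nat.not_lt_zero _)⟩
  have hz0 : ∀ r : Fin K → ℝ, zeroPad r 0 = 0 := fun r => by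
    funext i
    simp [zeroPad]
  ext r
  constructor
  · intro hA
    refine ⟨?_, fun k h1 h2 => ?_⟩
    · rcases Nat.eq_zero_or_pos K with h | h
      · subst h
        rw [Subsingleton.elim (0 : Fin 0 → ℝ) hne.some]
        exact hne.some_mem
      · rw [← hz0 r, ← key r 0 h (hp0 r)]
        exact (hA 0 h).resolve_left (not_not.2 (hp0 r))
    · by_cases hp : prefixMem U k (padR r)
      · left
        rw [← key r k (by omega) hp]
        exact (hA k (by omega)).resolve_left (not_not.2 hp)
      · exact Or.inr hp
  · rintro ⟨h0, hV⟩ k hk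
    by_cases hp : prefixMem U k (padR r)
    · right
      rw [key r k hk hp]
      rcases Nat.eq_zero_or_pos k with h | h
      · subst h; rw [hz0]; exact h0
      · exact (hV k h (by omega)).resolve_right (not_not.2 hp)
    · exact Or.inl hp
end

section
/- Let U ⊆ ℝ^K be nonempty, convex and compact. For every k ∈ {0,…,K−1} and every prefix w ∈ U_{1:k}: π^U_k(w) = 0 if w⌢0_{K−k} ∈ U, and π^U_k(w) = −∞ otherwise. (Moreover, for an arbitrary subset U ⊆ ℝ^K and any k and w ∈ ℝ^k, one always has π^U_k(w) ≤ 0.) -/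
open scoped BigOperators

lemma aux_le {K : ℕ} (U : Set (Fin K → ℝ)) : ∀ n k : ℕ, K - k = n → ∀ w : ℕ → ℝ,
    piVal U k w ≤ 0 := by
  intro n
  induction n with
  | zero =>
    intro k hk w
    rw [piVal, dif_neg (by omega)]
  | succ n ih =>
    intro k hk w
    rw [piVal, dif_pos (by omega)]
    refine iInf_le_of_le 0 (iSup₂_le fun s _ => ?_)
    simpa using ih (k + 1) (by omega) (Function.update w k s)

lemma aux_sep (S : Set ℝ) (hc : Convex ℝ S) (hS : IsClosed S) (h0 : (0 : ℝ) ∉ S) :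
    ∃ c : ℝ, ∀ s ∈ S, 1 ≤ c * s := by
  obtain ⟨f, u, hu, hf⟩ := geometric_hahn_banach_point_closed hc hS h0
  rw [map_zero] at hu
  refine ⟨f 1 / u, fun s hs => ?_⟩
  have h1 : f s = s * f 1 := by
    have := f.map_smul s (1 : ℝ)
    simpa using this
  have h2 := hf s hs
  rw [div_mul_eq_mul_div, le_div_iff₀ hu]
  linarith

lemma aux_pad_zero {K : ℕ} (w : ℕ → ℝ) (k : ℕ) :
    padPrefix K (Function.update w k 0) (k + 1) = padPrefix K w k := by
  funext i
  simp only [padPrefix, Function.update_apply]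
  split_ifs <;> first | rfl | omega

lemma aux_pad_eq {K : ℕ} (w : ℕ → ℝ) (k : ℕ) (s : ℝ) :
    padPrefix K (Function.update w k s) (k + 1)
      = fun i : Fin K => padPrefix K w k i + s * (if (i : ℕ) = k then 1 else 0) := by
  funext i
  simp only [padPrefix, Function.update_apply]
  split_ifs <;> first | omega | simp

lemma aux_main {K : ℕ} (U : Set (Fin K → ℝ)) (hc : Convex ℝ U) (hU : IsClosed U) :
    ∀ n k : ℕ, k + n = K → ∀ w : ℕ → ℝ, prefixMem U k w →
        (padPrefix K w k ∈ U → piVal U k w = 0) ∧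
        (padPrefix K w k ∉ U → piVal U k w = ⊥) := by
  intro n
  induction n with
  | zero =>
    rintro k hk w ⟨r, hr, hrw⟩
    have h1 : padPrefix K w k = r := by
      funext i
      have hi : (i : ℕ) < k := by omega
      simp [padPrefix, hi, hrw i hi]
    rw [h1, piVal, dif_neg (by omega)]
    exact ⟨fun _ => rfl, fun h => absurd hr h⟩
  | succ n ih =>
    intro k hk w hw
    have hkK : k < K := by omega
    have hpre : ∀ s ∈ oneStep U k w, prefixMem U (k + 1) (Function.update w k s) := by
      rintro s ⟨r, hr, h1, h2⟩
      refine ⟨r, hr, fun i hi => ?_⟩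
      by_cases hik : (i : ℕ) = k
      · rw [hik, Function.update_self, ← h2 hkK]
        congr 1
        exact Fin.ext hik
      · rw [Function.update_of_ne hik]
        exact h1 i (by omega)
    constructor
    · intro hp
      refine le_antisymm (aux_le U _ k rfl w) ?_
      rw [piVal, dif_pos hkK]
      refine le_iInf fun ζ => ?_
      have h0 : (0 : ℝ) ∈ oneStep U k w := by
        refine ⟨_, hp, fun i hi => ?_, fun h => ?_⟩ <;> simp [padPrefix]
        intro h; omega
      refine le_trans ?_ (le_iSup₂ (0 : ℝ) h0)
      rw [(ih (k + 1) (by omega) _ (hpre 0 h0)).1 (by rw [aux_pad_zero]; exact hp)]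
      simp
    · intro hp
      obtain ⟨c, hcS⟩ := aux_sep {s : ℝ | padPrefix K (Function.update w k s) (k + 1) ∈ U}
        (by
          intro s hs t ht a b ha hb hab
          have := hc hs ht ha hb hab
          simp only [Set.mem_setOf_eq, aux_pad_eq] at this ⊢
          convert this using 1
          funext i
          simp only [Pi.add_apply, Pi.smul_apply, smul_eq_mul]
          linear_combination (-padPrefix K w k i) * hab)
        (by
          simp only [aux_pad_eq]
          exact hU.preimage (by fun_prop))
        (by simpa only [Set.mem_setOf_eq, aux_pad_zero] using hp)
      have key : ∀ M : ℝ, 0 ≤ M → piVal U k w ≤ ((-M : ℝ) : EReal) := by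
        intro M hM
        rw [piVal, dif_pos hkK]
        refine iInf_le_of_le (M * c) (iSup₂_le fun s hs => ?_)
        by_cases hsU : padPrefix K (Function.update w k s) (k + 1) ∈ U
        · rw [(ih (k + 1) (by omega) _ (hpre s hs)).1 hsU, add_zero, EReal.coe_le_coe_iff]
          have := hcS s hsU
          nlinarith
        · rw [(ih (k + 1) (by omega) _ (hpre s hs)).2 hsU, EReal.add_bot]
          exact bot_le
      rw [EReal.eq_bot_iff_forall_lt]
      intro y
      refine lt_of_le_of_lt (key (|y| + 1) (by positivity)) ?_
      rw [EReal.coe_lt_coe_iff]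
      have := neg_abs_le y
      linarith

/-- for a nonempty, convex and compact `U ⊆ ℝ^K` and any realizable prefix
`w ∈ U_{1:k}` (`k < K`), the game value `π^U_k(w)` is `0` if the zero-padded prefix
`w⌢0_{K-k}` lies in `U`, and `-∞` otherwise; moreover, for an arbitrary subset
`U ⊆ ℝ^K`, one always has `π^U_k(w) ≤ 0`. -/
theorem stmt_9 (K : ℕ) :
    (∀ U : Set (Fin K → ℝ), U.Nonempty → Convex ℝ U → IsCompact U →
      ∀ k : ℕ, k < K → ∀ w : ℕ → ℝ, prefixMem U k w →
        (padPrefix K w k ∈ U → piVal U k w = 0) ∧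
        (padPrefix K w k ∉ U → piVal U k w = ⊥)) ∧
    (∀ U : Set (Fin K → ℝ), ∀ k : ℕ, ∀ w : ℕ → ℝ, piVal U k w ≤ 0) := by
  exact ⟨fun U _ hc hU k hk w hw => aux_main U hc hU.isClosed (K - k) k (by omega) w hw,
    fun U k w => aux_le U _ k rfl w⟩
end

section
/- For every subset U ⊆ ℝ^K, U ∩ V(U) ⊆ V(U ∩ V(U)). -/
open scoped BigOperators

/-- for every subset `U ⊆ ℝ^K`, `U ∩ V(U) ⊆ V(U ∩ V(U))`. -/
theorem stmt_11 {K : ℕ} (U : Set (Fin K → ℝ)) :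
    U ∩ Vset U ⊆ Vset (U ∩ Vset U) := by
  rintro r ⟨hrU, h0, hr⟩
  have key : ∀ k : ℕ, 1 ≤ k → k ≤ K - 1 → zeroPad r k ∈ U := by
    intro k h1 h2
    rcases hr k h1 h2 with h | h
    · exact h
    · exact absurd ⟨r, hrU, fun i _ => by simp [padR]⟩ h
  refine ⟨⟨h0, h0, fun j _ _ => Or.inl ?_⟩, fun k h1 h2 => Or.inl
    ⟨key k h1 h2, h0, fun j h3 h4 => Or.inl ?_⟩⟩
  · have : zeroPad (0 : Fin K → ℝ) j = 0 := by
      funext i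
      simp [zeroPad]
    rw [this]
    exact h0
  · have : zeroPad (zeroPad r k) j = zeroPad r (min j k) := by
      funext i
      simp only [zeroPad, lt_min_iff]
      split_ifs <;> first | rfl | (exfalso; tauto)
    rw [this]
    exact key _ (le_min h3 h1) ((min_le_left _ _).trans h4)
end

section
/- For every k ∈ {0,…,K−1} and every prefix w ∈ (U_2)_{1:k}, the game value satisfies π^{U_2}_k(w) = 0 (the proof uses that each one-step projection (U_2)_{k+1}(w) of a realizable prefix is nonempty and symmetric about 0, since the constraints defining U_2 depend on the returns only through their squares); consequently A(U_2) = ℝ^K, i.e., the worst-case risk measure built on U_2 satisfies the bounded conditional market risk property. -/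
open scoped BigOperators

theorem piVal_zero_aux {K : ℕ} (U : Set (Fin K → ℝ))
    (hU : ∀ r ∈ U, ∀ k, Function.update r k (-(r k)) ∈ U) (n : ℕ) :
    ∀ k : ℕ, K - k = n → ∀ w : ℕ → ℝ, prefixMem U k w → piVal U k w = 0 := by
  induction n with
  | zero =>
    intro k hk w _
    rw [piVal, dif_neg (by omega)]
  | succ n ih =>
    intro k hk w hw
    have hkK : k < K := by omega
    have h1 : ∀ s ∈ oneStep U k w, piVal U (k + 1) (Function.update w k s) = 0 := by
      rintro s ⟨r, hr, hrw, hrs⟩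
      refine ih (k + 1) (by omega) _ ⟨r, hr, fun i hi => ?_⟩
      by_cases hik : (i : ℕ) = k
      · rw [hik, Function.update_self, ← hrs hkK]
        congr 1
        exact Fin.ext hik
      · rw [Function.update_of_ne hik]
        exact hrw i (by omega)
    obtain ⟨r, hr, hrw⟩ := hw
    have hp : r ⟨k, hkK⟩ ∈ oneStep U k w := ⟨r, hr, hrw, fun _ => rfl⟩
    have hm : -(r ⟨k, hkK⟩) ∈ oneStep U k w := by
      refine ⟨_, hU r hr ⟨k, hkK⟩, fun i hi => ?_, fun _ => by simp⟩
      rw [Function.update_of_ne]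
      · exact hrw i hi
      · rintro rfl
        simp at hi
    rw [piVal, dif_pos hkK]
    apply le_antisymm
    · refine iInf_le_of_le 0 (iSup₂_le fun s hs => ?_)
      rw [h1 s hs]
      simp
    · refine le_iInf fun ζ => ?_
      rcases le_total 0 (-ζ * r ⟨k, hkK⟩) with h | h
      · refine le_iSup₂_of_le _ hp ?_
        rw [h1 _ hp, add_zero]
        exact_mod_cast h
      · refine le_iSup₂_of_le _ hm ?_
        rw [h1 _ hm, add_zero]
        have : 0 ≤ -ζ * -(r ⟨k, hkK⟩) := by linarith
        exact_mod_cast this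

/-- for the uncertainty set `U_2` (whose constraints depend on the returns
only through their squares), the game value of every realizable prefix is `0`;
consequently `A(U_2) = ℝ^K`, i.e. the worst-case risk measure built on `U_2` satisfies
the bounded conditional market risk property. -/
theorem stmt_14 (S N : ℕ) (hS : 1 ≤ S) (hN : 1 ≤ N) (K : ℕ) (hK : K = S * N)
    (σ T Γ : ℝ) (hσ : 0 ≤ σ) (hT : 0 < T) (hΓ : 0 ≤ Γ)
    (U2 : Set (Fin K → ℝ))
    (hU2 : U2 = {r | ∀ s : ℕ, 1 ≤ s → s ≤ S →
      σ ^ 2 * s * T / S - Γ * Real.sqrt (s * N)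
          ≤ ∑ i ∈ Finset.univ.filter (fun i : Fin K => (i : ℕ) < s * N), (r i) ^ 2 ∧
      ∑ i ∈ Finset.univ.filter (fun i : Fin K => (i : ℕ) < s * N), (r i) ^ 2
          ≤ σ ^ 2 * s * T / S + Γ * Real.sqrt (s * N)}) :
    (∀ k : ℕ, k < K → ∀ w : ℕ → ℝ, prefixMem U2 k w → piVal U2 k w = 0) ∧
    Aset U2 = Set.univ := by
  have hsym : ∀ r ∈ U2, ∀ k, Function.update r k (-(r k)) ∈ U2 := by
    intro r hr k
    have hsq : ∀ i, (Function.update r k (-(r k)) i) ^ 2 = (r i) ^ 2 := by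
      intro i
      by_cases h : i = k
      · subst h
        simp
      · rw [Function.update_of_ne h]
    rw [hU2] at hr ⊢
    simp only [Set.mem_setOf_eq, hsq] at hr ⊢
    exact hr
  have hz : ∀ k : ℕ, k < K → ∀ w : ℕ → ℝ, prefixMem U2 k w → piVal U2 k w = 0 :=
    fun k _ w hw => piVal_zero_aux U2 hsym _ k rfl w hw
  refine ⟨hz, Set.eq_univ_of_forall fun r k hk => ?_⟩
  by_cases h : prefixMem U2 k (padR r)
  · right
    rw [hz k hk _ h]
    exact ⟨EReal.bot_lt_zero, le_rfl⟩
  · exact Or.inl h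
end

section
/- For every p_0 ∈ ℝ, the writer's minimal worst-case risk equals ϱ^w(p_0) = −p_0 + (S_0 − l)(u − Kstr)/(u − l), and the infimum over ξ is attained at ξ* = (u − Kstr)/(u − l). -/
/-- in the one-period worst-case model, the writer's minimal worst-case
risk is `ϱ^w(p₀) = -p₀ + (S₀ - l)(u - Kstr)/(u - l)`, and the infimum over the hedging
position `ξ` is attained at `ξ* = (u - Kstr)/(u - l)`. -/
theorem stmt_15 (l u S0 Kstr : ℝ) (hlu : l < u)
    (hS0l : l ≤ S0) (hS0u : S0 ≤ u) (hKl : l ≤ Kstr) (hKu : Kstr ≤ u) :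
    ∀ p0 : ℝ,
      sInf (Set.range fun ξ : ℝ =>
          sSup ((fun S1 : ℝ => max (S1 - Kstr) 0 - p0 - ξ * (S1 - S0)) '' Set.Icc l u))
        = -p0 + (S0 - l) * (u - Kstr) / (u - l) ∧
      sSup ((fun S1 : ℝ => max (S1 - Kstr) 0 - p0 - ((u - Kstr) / (u - l)) * (S1 - S0))
          '' Set.Icc l u)
        = -p0 + (S0 - l) * (u - Kstr) / (u - l) := by
  intro p0
  have hd : 0 < u - l := sub_pos.mpr hlu
  have hcd : (u - Kstr) / (u - l) * (u - l) = u - Kstr := div_mul_cancel₀ _ hd.ne'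
  have hc0 : 0 ≤ (u - Kstr) / (u - l) := div_nonneg (by linarith) hd.le
  have hc1 : (u - Kstr) / (u - l) ≤ 1 := by
    rw [div_le_one hd]; linarith
  have hv : (S0 - l) * (u - Kstr) / (u - l) = (S0 - l) * ((u - Kstr) / (u - l)) :=
    mul_div_assoc _ _ _
  rw [hv]
  generalize (u - Kstr) / (u - l) = c at *
  have hopt : sSup ((fun S1 : ℝ => max (S1 - Kstr) 0 - p0 - c * (S1 - S0)) '' Set.Icc l u)
      = -p0 + (S0 - l) * c := by
    apply IsGreatest.csSup_eq
    constructor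
    · refine ⟨l, ⟨le_rfl, hlu.le⟩, ?_⟩
      have : max (l - Kstr) 0 = 0 := max_eq_right (by linarith)
      simp only [this]; ring
    · rintro _ ⟨S, ⟨h1, h2⟩, rfl⟩
      have : max (S - Kstr) 0 ≤ c * (S - l) := by
        apply max_le
        · nlinarith [mul_nonneg (sub_nonneg.mpr hc1) (sub_nonneg.mpr h2)]
        · exact mul_nonneg hc0 (by linarith)
      simp only
      linarith
  refine ⟨?_, hopt⟩
  apply IsLeast.csInf_eq
  refine ⟨⟨c, hopt⟩, ?_⟩
  rintro _ ⟨ξ, rfl⟩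
  have hb : BddAbove ((fun S1 : ℝ => max (S1 - Kstr) 0 - p0 - ξ * (S1 - S0)) '' Set.Icc l u) :=
    (isCompact_Icc.image (by fun_prop)).bddAbove
  have h1 := le_csSup hb ⟨l, ⟨le_rfl, hlu.le⟩, rfl⟩
  have h2 := le_csSup hb ⟨u, ⟨hlu.le, le_rfl⟩, rfl⟩
  simp only at h1 h2 ⊢
  rw [max_eq_right (by linarith : l - Kstr ≤ 0)] at h1
  rw [max_eq_left (by linarith : 0 ≤ u - Kstr)] at h2
  generalize sSup ((fun S1 : ℝ => max (S1 - Kstr) 0 - p0 - ξ * (S1 - S0)) '' Set.Icc l u) = s at h1 h2 ⊢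
  have h3 := mul_le_mul_of_nonneg_left h1 (sub_nonneg.mpr hS0u)
  have h4 := mul_le_mul_of_nonneg_left h2 (sub_nonneg.mpr hS0l)
  rw [← hcd] at h4
  refine le_of_mul_le_mul_left ?_ hd
  linarith
end

section
/- For every p_0 ∈ ℝ, the buyer's minimal worst-case risk equals ϱ^b(p_0) = p_0 − (S_0 − Kstr)⁺; the infimum over ξ is attained at ξ = 0 when S_0 < Kstr, and at ξ = −1 when S_0 ≥ Kstr. -/
/-- in the one-period worst-case model, the buyer's minimal worst-case
risk is `ϱ^b(p₀) = p₀ - (S₀ - Kstr)⁺`; the infimum over the hedging position `ξ` is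
attained at `ξ = 0` when `S₀ < Kstr` and at `ξ = -1` when `S₀ ≥ Kstr`. -/
theorem stmt_16 (l u S0 Kstr : ℝ) (hlu : l < u)
    (hS0l : l ≤ S0) (hS0u : S0 ≤ u) (hKl : l ≤ Kstr) (hKu : Kstr ≤ u) :
    ∀ p0 : ℝ,
      sInf (Set.range fun ξ : ℝ =>
          sSup ((fun S1 : ℝ => -(max (S1 - Kstr) 0) + p0 - ξ * (S1 - S0)) '' Set.Icc l u))
        = p0 - max (S0 - Kstr) 0 ∧
      (S0 < Kstr →
        sSup ((fun S1 : ℝ => -(max (S1 - Kstr) 0) + p0 - 0 * (S1 - S0)) '' Set.Icc l u)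
          = p0 - max (S0 - Kstr) 0) ∧
      (Kstr ≤ S0 →
        sSup ((fun S1 : ℝ => -(max (S1 - Kstr) 0) + p0 - (-1) * (S1 - S0)) '' Set.Icc l u)
          = p0 - max (S0 - Kstr) 0) := by
  intro p0
  have hmem : ∀ ξ : ℝ, p0 - max (S0 - Kstr) 0 ∈
      ((fun S1 : ℝ => -(max (S1 - Kstr) 0) + p0 - ξ * (S1 - S0)) '' Set.Icc l u) := by
    intro ξ
    exact ⟨S0, ⟨hS0l, hS0u⟩, by ring⟩
  have hbdd : ∀ ξ : ℝ, BddAbove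
      ((fun S1 : ℝ => -(max (S1 - Kstr) 0) + p0 - ξ * (S1 - S0)) '' Set.Icc l u) := by
    intro ξ
    exact (isCompact_Icc.image (by fun_prop)).bddAbove
  have h0 : S0 < Kstr →
        sSup ((fun S1 : ℝ => -(max (S1 - Kstr) 0) + p0 - 0 * (S1 - S0)) '' Set.Icc l u)
          = p0 - max (S0 - Kstr) 0 := by
    intro h
    refine IsGreatest.csSup_eq ⟨hmem 0, ?_⟩
    rintro _ ⟨x, _, rfl⟩
    have h1 := le_max_right (x - Kstr) 0
    have h2 : max (S0 - Kstr) 0 = 0 := max_eq_right (by linarith)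
    simp only [h2]
    linarith
  have h1 : Kstr ≤ S0 →
        sSup ((fun S1 : ℝ => -(max (S1 - Kstr) 0) + p0 - (-1) * (S1 - S0)) '' Set.Icc l u)
          = p0 - max (S0 - Kstr) 0 := by
    intro h
    refine IsGreatest.csSup_eq ⟨hmem (-1), ?_⟩
    rintro _ ⟨x, _, rfl⟩
    have h1 := le_max_left (x - Kstr) 0
    have h2 : max (S0 - Kstr) 0 = S0 - Kstr := max_eq_left (by linarith)
    simp only [h2]
    linarith
  refine ⟨IsLeast.csInf_eq ⟨?_, ?_⟩, h0, h1⟩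
  · rcases lt_or_ge S0 Kstr with h | h
    · exact ⟨0, h0 h⟩
    · exact ⟨-1, h1 h⟩
  · rintro _ ⟨ξ, rfl⟩
    exact le_csSup (hbdd ξ) (hmem ξ)
end

section
/- The price p_0* := (1/2)(S_0 − l)(u − Kstr)/(u − l) + (1/2)(S_0 − Kstr)⁺ is the unique real number at which ϱ^w(p_0*) = ϱ^b(p_0*) (the one-period equal risk price), and the common value of the two minimal risks at p_0* equals (1/2)(S_0 − l)(u − Kstr)/(u − l) − (1/2)(S_0 − Kstr)⁺. -/
theorem aux_inf_sup (l u S0 V : ℝ) (f : ℝ → ℝ) (hf : Continuous f)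
    (h1 : ∃ ξ : ℝ, ∀ S ∈ Set.Icc l u, f S - ξ * (S - S0) ≤ V)
    (h2 : ∀ ξ : ℝ, ∃ S ∈ Set.Icc l u, V ≤ f S - ξ * (S - S0)) :
    sInf (Set.range fun ξ : ℝ =>
      sSup ((fun S1 : ℝ => f S1 - ξ * (S1 - S0)) '' Set.Icc l u)) = V := by
  have low : ∀ ξ : ℝ, V ≤ sSup ((fun S1 : ℝ => f S1 - ξ * (S1 - S0)) '' Set.Icc l u) := by
    intro ξ
    obtain ⟨S, hS, h⟩ := h2 ξ
    have hb : BddAbove ((fun S1 : ℝ => f S1 - ξ * (S1 - S0)) '' Set.Icc l u) :=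
      (isCompact_Icc.image (by fun_prop)).bddAbove
    exact h.trans (le_csSup hb ⟨S, hS, rfl⟩)
  apply le_antisymm
  · obtain ⟨ξ, h⟩ := h1
    obtain ⟨S, hS, -⟩ := h2 ξ
    refine le_trans (csInf_le ⟨V, ?_⟩ (Set.mem_range_self ξ)) (csSup_le ⟨_, Set.mem_image_of_mem _ hS⟩ ?_)
    · rintro _ ⟨ξ, rfl⟩
      exact low ξ
    · rintro _ ⟨S, hS, rfl⟩
      exact h S hS
  · refine le_csInf (Set.range_nonempty _) ?_
    rintro _ ⟨ξ, rfl⟩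
    exact low ξ

/-- in the one-period worst-case model, the price
`p₀* = (1/2)(S₀ - l)(u - Kstr)/(u - l) + (1/2)(S₀ - Kstr)⁺` is the unique price at which
the writer's and buyer's minimal worst-case risks coincide (the equal risk price), and
the common minimal risk at `p₀*` equals
`(1/2)(S₀ - l)(u - Kstr)/(u - l) - (1/2)(S₀ - Kstr)⁺`. -/
theorem stmt_17 (l u S0 Kstr : ℝ) (hlu : l < u)
    (hS0l : l ≤ S0) (hS0u : S0 ≤ u) (hKl : l ≤ Kstr) (hKu : Kstr ≤ u)
    (ϱw ϱb : ℝ → ℝ)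
    (hϱw : ∀ p0 : ℝ, ϱw p0 = sInf (Set.range fun ξ : ℝ =>
      sSup ((fun S1 : ℝ => max (S1 - Kstr) 0 - p0 - ξ * (S1 - S0)) '' Set.Icc l u)))
    (hϱb : ∀ p0 : ℝ, ϱb p0 = sInf (Set.range fun ξ : ℝ =>
      sSup ((fun S1 : ℝ => -(max (S1 - Kstr) 0) + p0 - ξ * (S1 - S0)) '' Set.Icc l u))) :
    ϱw ((1 / 2) * (S0 - l) * (u - Kstr) / (u - l) + (1 / 2) * max (S0 - Kstr) 0)
      = ϱb ((1 / 2) * (S0 - l) * (u - Kstr) / (u - l) + (1 / 2) * max (S0 - Kstr) 0) ∧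
    (∀ p0 : ℝ, ϱw p0 = ϱb p0 →
      p0 = (1 / 2) * (S0 - l) * (u - Kstr) / (u - l) + (1 / 2) * max (S0 - Kstr) 0) ∧
    ϱw ((1 / 2) * (S0 - l) * (u - Kstr) / (u - l) + (1 / 2) * max (S0 - Kstr) 0)
      = (1 / 2) * (S0 - l) * (u - Kstr) / (u - l) - (1 / 2) * max (S0 - Kstr) 0 := by
  obtain ⟨c, hc⟩ : ∃ c, c = (u - Kstr) / (u - l) := ⟨_, rfl⟩
  have hul : 0 < u - l := by linarith
  have hcm : c * (u - l) = u - Kstr := by rw [hc]; field_simp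
  have hc0 : 0 ≤ c := by rw [hc]; exact div_nonneg (by linarith) hul.le
  have hc1 : c ≤ 1 := by rw [hc, div_le_one hul]; linarith
  have hA : (1 / 2) * (S0 - l) * (u - Kstr) / (u - l) = (1 / 2) * (c * (S0 - l)) := by
    rw [hc]; ring
  have hw : ∀ p, ϱw p = c * (S0 - l) - p := by
    intro p
    rw [hϱw]
    refine aux_inf_sup l u S0 _ (fun S1 => max (S1 - Kstr) 0 - p) (by fun_prop) ⟨c, ?_⟩ ?_
    · rintro S ⟨h1, h2⟩
      have : max (S - Kstr) 0 ≤ c * (S - l) := by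
        apply max_le
        · nlinarith
        · exact mul_nonneg hc0 (by linarith)
      linarith
    · intro ξ
      rcases le_total c ξ with h | h
      · refine ⟨l, ⟨le_rfl, hlu.le⟩, ?_⟩
        have := le_max_right (l - Kstr) 0
        nlinarith
      · refine ⟨u, ⟨hlu.le, le_rfl⟩, ?_⟩
        have := le_max_left (u - Kstr) 0
        nlinarith
  have hb : ∀ p, ϱb p = p - max (S0 - Kstr) 0 := by
    intro p
    rw [hϱb]
    refine aux_inf_sup l u S0 _ (fun S1 => -(max (S1 - Kstr) 0) + p) (by fun_prop) ?_ ?_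
    · rcases le_total Kstr S0 with h | h
      · refine ⟨-1, fun S _ => ?_⟩
        have := le_max_left (S - Kstr) 0
        rw [max_eq_left (by linarith : 0 ≤ S0 - Kstr)]
        linarith
      · refine ⟨0, fun S _ => ?_⟩
        have := le_max_right (S - Kstr) 0
        rw [max_eq_right (by linarith : S0 - Kstr ≤ 0)]
        linarith
    · intro ξ
      refine ⟨S0, ⟨hS0l, hS0u⟩, ?_⟩
      linarith
  rw [hA]
  refine ⟨?_, ?_, ?_⟩
  · rw [hw, hb]; ring
  · intro p h
    rw [hw, hb] at h
    linarith
  · rw [hw]; ring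
end

section
/- The one-period ε-arbitrage problem inf_{(ξ,p_0)∈ℝ²} sup_{S_1∈[l,u]} |(S_1−Kstr)⁺ − p_0 − ξ(S_1−S_0)| has optimal value (u − Kstr)(Kstr − l)/(2(u − l)), and the infimum is attained at ξ* = (u − Kstr)/(u − l) and p_0* = (u − Kstr)/(u − l) · (S_0 − (Kstr + l)/2). -/
theorem lower_aux (l u S0 K x p : ℝ) (hlu : l < u) (hKl : l ≤ K) (hKu : K ≤ u) :
    (u - K) * (K - l) / (2 * (u - l)) ≤
      sSup ((fun S1 : ℝ => |max (S1 - K) 0 - p - x * (S1 - S0)|) '' Set.Icc l u) := by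
  have hb : BddAbove ((fun S1 : ℝ => |max (S1 - K) 0 - p - x * (S1 - S0)|) '' Set.Icc l u) :=
    (isCompact_Icc.image (by fun_prop)).bddAbove
  have h1 := le_csSup hb (Set.mem_image_of_mem _ (Set.left_mem_Icc.2 hlu.le))
  have h2 := le_csSup hb (Set.mem_image_of_mem _ (Set.right_mem_Icc.2 hlu.le))
  have h3 := le_csSup hb (Set.mem_image_of_mem _ (Set.mem_Icc.2 ⟨hKl, hKu⟩))
  generalize sSup ((fun S1 : ℝ => |max (S1 - K) 0 - p - x * (S1 - S0)|) '' Set.Icc l u) = M at *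
  rw [max_eq_right (by linarith)] at h1 h3
  rw [max_eq_left (by linarith)] at h2
  have h1' := (abs_le.1 h1).2
  have h2' := (abs_le.1 h2).2
  have h3' := (abs_le.1 h3).1
  rw [div_le_iff₀ (by linarith)]
  have e1 := mul_le_mul_of_nonneg_left h1' (sub_nonneg.2 hKu)
  have e2 := mul_le_mul_of_nonneg_left h2' (sub_nonneg.2 hKl)
  have e3 := mul_le_mul_of_nonneg_left h3' (sub_nonneg.2 hlu.le)
  linarith

theorem upper_aux (l u S0 K : ℝ) (hlu : l < u) (hKl : l ≤ K) (hKu : K ≤ u) :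
    sSup ((fun S1 : ℝ => |max (S1 - K) 0 - ((u - K) / (u - l)) * (S0 - (K + l) / 2)
          - ((u - K) / (u - l)) * (S1 - S0)|) '' Set.Icc l u)
      ≤ (u - K) * (K - l) / (2 * (u - l)) := by
  apply csSup_le ((Set.nonempty_Icc.2 hlu.le).image _)
  rintro _ ⟨s, ⟨hs1, hs2⟩, rfl⟩
  have hd : 0 < u - l := by linarith
  have hV : (u - K) * (K - l) / (2 * (u - l)) = (u - K) / (u - l) * (K - l) / 2 := by
    field_simp
  rw [hV]
  have ha : (u - K) / (u - l) * (u - l) = u - K := by field_simp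
  have ha0 : 0 ≤ (u - K) / (u - l) := div_nonneg (by linarith) hd.le
  have ha1 : (u - K) / (u - l) ≤ 1 := by rw [div_le_one hd]; linarith
  simp only
  generalize (u - K) / (u - l) = a at *
  rcases le_total s K with h | h
  · rw [max_eq_right (by linarith), abs_le]
    constructor <;> nlinarith [mul_nonneg ha0 (sub_nonneg.2 h), mul_nonneg ha0 (sub_nonneg.2 hs1)]
  · rw [max_eq_left (by linarith), abs_le]
    have b0 : 0 ≤ 1 - a := by linarith
    constructor <;> nlinarith [mul_nonneg b0 (sub_nonneg.2 h), mul_nonneg b0 (sub_nonneg.2 hs2)]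

/-- the one-period ε-arbitrage problem
`inf_{(ξ,p₀) ∈ ℝ²} sup_{S₁ ∈ [l,u]} |(S₁ - Kstr)⁺ - p₀ - ξ(S₁ - S₀)|` has optimal value
`(u - Kstr)(Kstr - l)/(2(u - l))`, attained at `ξ* = (u - Kstr)/(u - l)` and
`p₀* = (u - Kstr)/(u - l) · (S₀ - (Kstr + l)/2)`. -/
theorem stmt_18 (l u S0 Kstr : ℝ) (hlu : l < u)
    (hS0l : l ≤ S0) (hS0u : S0 ≤ u) (hKl : l ≤ Kstr) (hKu : Kstr ≤ u) :
    sInf (Set.range fun q : ℝ × ℝ =>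
        sSup ((fun S1 : ℝ => |max (S1 - Kstr) 0 - q.2 - q.1 * (S1 - S0)|) '' Set.Icc l u))
      = (u - Kstr) * (Kstr - l) / (2 * (u - l)) ∧
    sSup ((fun S1 : ℝ =>
        |max (S1 - Kstr) 0 - ((u - Kstr) / (u - l)) * (S0 - (Kstr + l) / 2)
          - ((u - Kstr) / (u - l)) * (S1 - S0)|) '' Set.Icc l u)
      = (u - Kstr) * (Kstr - l) / (2 * (u - l)) := by
  have h2 := le_antisymm (upper_aux l u S0 Kstr hlu hKl hKu)
    (lower_aux l u S0 Kstr ((u - Kstr) / (u - l))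
      (((u - Kstr) / (u - l)) * (S0 - (Kstr + l) / 2)) hlu hKl hKu)
  refine ⟨?_, h2⟩
  apply IsLeast.csInf_eq
  refine ⟨⟨((u - Kstr) / (u - l), ((u - Kstr) / (u - l)) * (S0 - (Kstr + l) / 2)), h2⟩, ?_⟩
  rintro _ ⟨q, rfl⟩
  exact lower_aux l u S0 Kstr q.1 q.2 hlu hKl hKu
end
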